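/- arXiv:1604.07575 — 3 statements merged into one kernel-verified Lean document; each statement's English description precedes it below -/
import Mathlib

section
/- Let ∑ x_n be a conditionally convergent series in a Banach space X. Then the achievement set A(x) is perfectly dense-in-itself: for every s ∈ A(x) and every ε > 0, the intersection A(x) ∩ B(s, ε) of A(x) with the open ball of radius ε centered at s contains a nonempty compact perfect set. -/
open Filter Topology

/-- The achievement set of a sequence: all limits of partial sums of subseries. -/
def achv {X : Type*} [AddCommMonoid X] [TopologicalSpace X] (x : ℕ → X) : Set X :=
  {s | ∃ ε : ℕ → Bool,
    Tendsto (fun N => ∑ n ∈ Finset.range N, if ε n then x n else 0) atTop (𝓝 s)}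

section SubseriesSums

variable {X : Type*} [NormedAddCommGroup X]

/-- Infinitely many nonzero terms of a null sequence can be selected with a small sum of norms. -/
lemma exists_strictMono_ne_zero_tsum_norm_lt {x : ℕ → X} (hx : Tendsto x atTop (𝓝 0))
    (hne : ∃ᶠ n in atTop, x n ≠ 0) {r : ℝ} (hr : 0 < r) :
    ∃ φ : ℕ → ℕ, StrictMono φ ∧ (∀ k, x (φ k) ≠ 0) ∧
      (Summable fun k => ‖x (φ k)‖) ∧ ∑' k, ‖x (φ k)‖ < r := by
  have hfreq : ∀ k : ℕ, ∃ᶠ n in atTop, x n ≠ 0 ∧ ‖x n‖ < r / 2 / 2 / 2 ^ k := fun k =>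
    hne.and_eventually (hx.norm.eventually_lt_const (by rw [norm_zero]; positivity))
  obtain ⟨φ, hφ, h⟩ := extraction_forall_of_frequently hfreq
  have hle : ∀ k, ‖x (φ k)‖ ≤ r / 2 / 2 / 2 ^ k := fun k => (h k).2.le
  have hsum := Summable.of_nonneg_of_le (fun _ => norm_nonneg _) hle (summable_geometric_two' _)
  refine ⟨φ, hφ, fun k => (h k).1, hsum, ?_⟩
  calc ∑' k, ‖x (φ k)‖ ≤ ∑' k : ℕ, r / 2 / 2 / 2 ^ k :=
        hsum.tsum_le_tsum hle (summable_geometric_two' _)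
    _ = r / 2 := tsum_geometric_two' _
    _ < r := half_lt_self hr

lemma norm_ite_zero_le (b : Bool) (v : X) : ‖if b then v else 0‖ ≤ ‖v‖ := by
  cases b <;> simp

/-- The sum of the subseries of `w` selected by `δ`. -/
noncomputable def subseriesSum (w : ℕ → X) (δ : ℕ → Bool) : X :=
  ∑' n, if δ n then w n else 0

lemma norm_subseriesSum_le {w : ℕ → X} (hw : Summable fun n => ‖w n‖) (δ : ℕ → Bool) :
    ‖subseriesSum w δ‖ ≤ ∑' n, ‖w n‖ :=
  tsum_of_norm_bounded hw.hasSum fun n => norm_ite_zero_le (δ n) (w n)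

variable [CompleteSpace X]

lemma Summable.ite_bool {w : ℕ → X} (hw : Summable fun n => ‖w n‖) (δ : ℕ → Bool) :
    Summable fun n => if δ n then w n else 0 :=
  .of_norm_bounded hw fun n => norm_ite_zero_le (δ n) (w n)

lemma continuous_subseriesSum {w : ℕ → X} (hw : Summable fun n => ‖w n‖) :
    Continuous (subseriesSum w) :=
  continuous_tsum
    (fun n => (continuous_of_discreteTopology (f := fun b : Bool => if b then w n else 0)).comp
      (continuous_apply n))
    hw fun n δ => norm_ite_zero_le (δ n) (w n)

lemma norm_subseriesSum_update_sub {w : ℕ → X} (hw : Summable fun n => ‖w n‖) (δ : ℕ → Bool)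
    (m : ℕ) :
    ‖subseriesSum w (Function.update δ m (!δ m)) - subseriesSum w δ‖ = ‖w m‖ := by
  rw [subseriesSum, subseriesSum, ← (hw.ite_bool _).tsum_sub (hw.ite_bool δ), tsum_eq_single m]
  · cases h : δ m <;> simp
  · intro n hn
    simp [Function.update_of_ne hn]

/-- The subsums of an absolutely convergent series with infinitely many nonzero terms form a
perfect set. -/
lemma perfect_range_subseriesSum {w : ℕ → X} (hw : Summable fun n => ‖w n‖)
    (hne : ∃ᶠ n in atTop, w n ≠ 0) (s : X) :
    Perfect (Set.range fun δ => s + subseriesSum w δ) := by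
  refine ⟨(isCompact_range (continuous_const.add (continuous_subseriesSum hw))).isClosed, ?_⟩
  rintro _ ⟨δ, rfl⟩
  rw [accPt_iff_nhds]
  intro U hU
  obtain ⟨r, hr, hrU⟩ := Metric.mem_nhds_iff.1 hU
  obtain ⟨m, hm, hmr⟩ :=
    (hne.and_eventually (hw.tendsto_atTop_zero.eventually_lt_const hr)).exists
  have hdist : dist (s + subseriesSum w (Function.update δ m (!δ m))) (s + subseriesSum w δ)
      = ‖w m‖ := by
    rw [dist_add_left, dist_eq_norm, norm_subseriesSum_update_sub hw]
  refine ⟨_, ⟨hrU ?_, Set.mem_range_self (Function.update δ m (!δ m))⟩, ?_⟩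
  · rwa [Metric.mem_ball, hdist]
  · rw [← dist_pos, hdist]
    exact norm_pos_iff.2 hm

end SubseriesSums

/-- If `∑ x_n` is conditionally convergent in a Banach space, then `A(x)` is
perfectly dense-in-itself: for every `s ∈ A(x)` and `ε > 0`, the set `A(x) ∩ B(s, ε)`
contains a nonempty compact perfect set. -/
theorem stmt_6 {X : Type*} [NormedAddCommGroup X] [NormedSpace ℝ X] [CompleteSpace X]
    (x : ℕ → X)
    (hconv : ∃ s, Tendsto (fun N => ∑ n ∈ Finset.range N, x n) atTop (𝓝 s))
    (hnabs : ¬ Summable fun n => ‖x n‖) :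
    ∀ s ∈ achv x, ∀ ε > (0 : ℝ), ∃ K : Set X,
      K ⊆ achv x ∩ Metric.ball s ε ∧ K.Nonempty ∧ IsCompact K ∧ Perfect K := by
  rintro s ⟨e, he⟩ r hr
  have hx : Tendsto x atTop (𝓝 0) := by
    obtain ⟨t, ht⟩ := hconv
    simpa [Finset.sum_range_succ] using (ht.comp (tendsto_add_atTop_nat 1)).sub ht
  have hne : ∃ᶠ n in atTop, x n ≠ 0 := by
    intro h
    refine hnabs (summable_of_hasFiniteSupport ?_)
    rw [← Nat.cofinite_eq_atTop] at h
    refine (eventually_cofinite.1 h).subset fun n hn => ?_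
    simpa using hn
  obtain ⟨φ, hφ, hφne, hφsum, hφlt⟩ := exists_strictMono_ne_zero_tsum_norm_lt hx hne hr
  classical
  -- `w n` is the change in the `n`-th summand when the choice at a selected index is flipped
  let w : ℕ → X := fun n => if n ∈ Set.range φ then (if e n then -x n else x n) else 0
  have hwφ : ∀ k, ‖w (φ k)‖ = ‖x (φ k)‖ := fun k => by
    cases h : e (φ k) <;> simp [w, h]
  have hw0 : ∀ n ∉ Set.range φ, ‖w n‖ = 0 := fun n hn => by simp only [w, if_neg hn, norm_zero]
  have hw : Summable fun n => ‖w n‖ := by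
    rw [← hφ.injective.summable_iff hw0]
    exact hφsum.congr fun k => (hwφ k).symm
  have hwlt : ∑' n, ‖w n‖ < r := by
    rw [← hφ.injective.tsum_eq (Function.support_subset_iff'.2 hw0)]
    simpa only [hwφ] using hφlt
  have hwne : ∃ᶠ n in atTop, w n ≠ 0 :=
    hφ.tendsto_atTop.frequently <| Frequently.of_forall fun k => by
      rw [← norm_ne_zero_iff, hwφ]
      exact norm_ne_zero_iff.2 (hφne k)
  refine ⟨Set.range fun δ => s + subseriesSum w δ, ?_, Set.range_nonempty _,
    isCompact_range (continuous_const.add (continuous_subseriesSum hw)),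
    perfect_range_subseriesSum hw hwne s⟩
  rintro _ ⟨δ, rfl⟩
  refine ⟨⟨fun n => xor (e n) (decide (n ∈ Set.range φ) && δ n), ?_⟩, ?_⟩
  · refine (he.add (hw.ite_bool δ).hasSum.tendsto_sum_nat).congr fun N => ?_
    rw [← Finset.sum_add_distrib]
    refine Finset.sum_congr rfl fun n _ => ?_
    by_cases hn : n ∈ Set.range φ
    · cases h : e n <;> cases h' : δ n <;> simp [w, if_pos hn, decide_eq_true hn, h, h', -Set.mem_range]
    · simp [w, hn, -Set.mem_range]
  · rw [Metric.mem_ball, dist_self_add_left]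
    exact (norm_subseriesSum_le hw δ).trans_lt hwlt
end

section
/- Let ∑ x_n be a conditionally convergent series in a Banach space X. Then SR(x) ⊆ closure(A(x)), i.e., the sum range of the series is contained in the closure of its achievement set. -/
open Filter Topology

/-- The sum range of a sequence: all sums of convergent rearrangements. -/
def sumRange {X : Type*} [AddCommMonoid X] [TopologicalSpace X] (x : ℕ → X) : Set X :=
  {s | ∃ σ : Equiv.Perm ℕ,
    Tendsto (fun N => ∑ n ∈ Finset.range N, x (σ n)) atTop (𝓝 s)}

/-- Every finite subsum of a sequence belongs to its achievement set. -/
theorem sum_finset_mem_achv {X : Type*} [AddCommMonoid X] [TopologicalSpace X] (x : ℕ → X)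
    (F : Finset ℕ) : ∑ n ∈ F, x n ∈ achv x := by
  refine ⟨fun n => decide (n ∈ F), tendsto_const_nhds.congr' ?_⟩
  filter_upwards [eventually_ge_atTop (F.sup id + 1)] with N hN
  have hF : F ⊆ Finset.range N := fun n hn =>
    Finset.mem_range.2 (Nat.lt_of_lt_of_le (Nat.lt_succ_of_le (Finset.le_sup (f := id) hn)) hN)
  simp [Finset.inter_eq_right.2 hF]

/-- For a conditionally convergent series in a Banach space,
`SR(x) ⊆ closure (A(x))`. -/
theorem stmt_8 {X : Type*} [NormedAddCommGroup X] [NormedSpace ℝ X] [CompleteSpace X]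
    (x : ℕ → X)
    (hconv : ∃ s, Tendsto (fun N => ∑ n ∈ Finset.range N, x n) atTop (𝓝 s))
    (hnabs : ¬ Summable fun n => ‖x n‖) :
    sumRange x ⊆ closure (achv x) := by
  rintro s ⟨σ, hσ⟩
  refine mem_closure_of_tendsto hσ (Eventually.of_forall fun N => ?_)
  simpa using sum_finset_mem_achv x ((Finset.range N).map σ.toEmbedding)
end

section
/- Let x : ℕ → ℝ^k be such that ∑ x_n is conditionally convergent with sum range SR(x) = ℝ^k, and let y : ℕ → ℝ^m be such that ∑ y_n is absolutely convergent (∑_n ‖y_n‖ < ∞). Consider the sequence of pairs (x_n, y_n) in ℝ^k × ℝ^m. Then closure(A((x_n, y_n)_n)) = ℝ^k × A(y). -/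
open Filter Topology

/-- For an absolutely convergent series, the achievement set is compact. -/
theorem isCompact_achv_of_summable_norm {E : Type*} [NormedAddCommGroup E] [CompleteSpace E]
    {y : ℕ → E} (hy : Summable fun n => ‖y n‖) : IsCompact (achv y) := by
  have hbound (n : ℕ) (ε : ℕ → Bool) : ‖if ε n then y n else 0‖ ≤ ‖y n‖ := by
    split_ifs <;> simp
  have hcont : Continuous fun ε : ℕ → Bool => ∑' n, if ε n then y n else 0 := by
    refine continuous_tsum (fun n => ?_) hy hbound
    exact (continuous_of_discreteTopology (f := fun b : Bool => if b then y n else 0)).comp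
      (continuous_apply n)
  have hrange : achv y = Set.range fun ε : ℕ → Bool => ∑' n, if ε n then y n else 0 := by
    ext s
    refine exists_congr fun ε => ?_
    have hlim := (Summable.of_norm_bounded hy fun n => hbound n ε).hasSum.tendsto_sum_nat
    exact ⟨fun h => tendsto_nhds_unique hlim h, fun h => h ▸ hlim⟩
  rw [hrange]
  exact isCompact_range hcont

/-- Every finite subsum belongs to the achievement set. -/
theorem sum_mem_achv {X : Type*} [AddCommMonoid X] [TopologicalSpace X] (x : ℕ → X)
    (T : Finset ℕ) : ∑ n ∈ T, x n ∈ achv x := by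
  refine ⟨fun n => decide (n ∈ T), tendsto_atTop_of_eventually_const (i₀ := T.sup id + 1) ?_⟩
  intro N hN
  have hT : T ⊆ Finset.range N := fun n hn => by
    have : n ≤ T.sup id := Finset.le_sup (f := id) hn
    simp only [Finset.mem_range]
    omega
  simp only [decide_eq_true_eq]
  rw [Finset.sum_ite_mem, Finset.inter_eq_right.2 hT]

/-- If every vector is the sum of a rearrangement of `∑ x_n`, then the finite subsums over indices
at least `N` are dense. -/
theorem exists_sum_dist_lt_of_sumRange_eq_univ {E : Type*} [SeminormedAddCommGroup E]
    {x : ℕ → E} (hsr : sumRange x = Set.univ) (N : ℕ) (a : E) {δ : ℝ} (hδ : 0 < δ) :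
    ∃ S : Finset ℕ, Disjoint S (Finset.range N) ∧ dist (∑ n ∈ S, x n) a < δ := by
  obtain ⟨σ, hσ⟩ : a + ∑ n ∈ Finset.range N, x n ∈ sumRange x := hsr ▸ Set.mem_univ _
  obtain ⟨M, hM, hcover⟩ := ((hσ.eventually (Metric.ball_mem_nhds _ hδ)).and
    (eventually_ge_atTop (((Finset.range N).image σ.symm).sup id + 1))).exists
  set T := (Finset.range M).map σ.toEmbedding with hT
  have hsub : Finset.range N ⊆ T := fun n hn => by
    have : σ.symm n ≤ ((Finset.range N).image σ.symm).sup id :=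
      Finset.le_sup (f := id) (Finset.mem_image_of_mem _ hn)
    refine Finset.mem_map.2 ⟨σ.symm n, Finset.mem_range.2 (by omega), by simp⟩
  refine ⟨T \ Finset.range N, Finset.sdiff_disjoint, ?_⟩
  have hsum : ∑ n ∈ T, x n = ∑ n ∈ Finset.range M, x (σ n) := by simp [hT]
  rwa [← hsum, ← Finset.sum_sdiff hsub, dist_add_right] at hM

/-- If `∑ x_n` is conditionally convergent in `ℝ^k` with `SR(x) = ℝ^k` and
`∑ y_n` is absolutely convergent in `ℝ^m`, then the closure of the achievement set of the
sequence of pairs `(x_n, y_n)` equals `ℝ^k × A(y)`. -/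
theorem stmt_9 (k m : ℕ) (x : ℕ → EuclideanSpace ℝ (Fin k))
    (y : ℕ → EuclideanSpace ℝ (Fin m))
    (hconv : ∃ s, Tendsto (fun N => ∑ n ∈ Finset.range N, x n) atTop (𝓝 s))
    (hnabs : ¬ Summable fun n => ‖x n‖)
    (hsr : sumRange x = Set.univ)
    (hy : Summable fun n => ‖y n‖) :
    closure (achv (fun n => (x n, y n))) = Set.univ ×ˢ achv y := by
  apply Set.Subset.antisymm
  · refine closure_minimal ?_
      (isClosed_univ.prod (isCompact_achv_of_summable_norm hy).isClosed)
    rintro ⟨a, b⟩ ⟨ε, hε⟩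
    refine ⟨Set.mem_univ _, ε, ((continuous_snd.tendsto _).comp hε).congr fun N => ?_⟩
    simp only [Function.comp_apply, Prod.snd_sum]
    exact Finset.sum_congr rfl fun n _ => by split_ifs <;> rfl
  · rintro ⟨a, b⟩ ⟨-, ε, hε⟩
    refine Metric.mem_closure_iff.2 fun δ hδ => ?_
    obtain ⟨s, hs⟩ := summable_iff_vanishing_norm.1 hy.of_norm (δ / 2) (half_pos hδ)
    obtain ⟨N, hN, hsN⟩ := ((hε.eventually (Metric.ball_mem_nhds _ (half_pos hδ))).and
      (eventually_ge_atTop (s.sup id + 1))).exists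
    set R := (Finset.range N).filter (fun n => ε n = true) with hR
    obtain ⟨S, hSN, hS⟩ :=
      exists_sum_dist_lt_of_sumRange_eq_univ hsr N (a - ∑ n ∈ R, x n) hδ
    have hSs : Disjoint S s := hSN.mono_right fun n hn => by
      have : n ≤ s.sup id := Finset.le_sup (f := id) hn
      simp only [Finset.mem_range]
      omega
    have hRS : Disjoint R S := (hSN.mono_right (Finset.filter_subset _ _)).symm
    refine ⟨_, sum_mem_achv _ (R ∪ S), ?_⟩
    rw [dist_comm, Prod.dist_eq, max_lt_iff, Prod.fst_sum, Prod.snd_sum,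
      Finset.sum_union hRS, Finset.sum_union hRS]
    constructor
    · rwa [dist_eq_norm, sub_sub_eq_add_sub, add_comm, ← dist_eq_norm] at hS
    · rw [← Finset.sum_filter, ← hR, dist_eq_norm] at hN
      rw [dist_eq_norm, add_sub_right_comm]
      linarith [norm_add_le (∑ n ∈ R, y n - b) (∑ n ∈ S, y n), hs S hSs]
end
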